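/- Let κ ≥ 4, μ ≥ 1, and 0 < ε ≤ μ²/4. Let x_1,…,x_n ∈ ℝ² and Y_1,…,Y_n ∈ {−1,1}; set n' = #{j : Y_j = −1} and assume n' ≥ 1, that n ≤ (1+2μ)·n', and that the matrix X' with rows {x_j : Y_j = −1} is μ-complex in the ℓ₁ sense. For c ∈ [0,1) and α ∈ ℝ², define f(Xα, c) = ∑_{j: Y_j = −1} g_c(x_j·α) + ∑_{j: Y_j = 1} h_c(x_j·α). Then for every c ∈ [1/κ, 1/2) and every α ∈ ℝ²: |f(Xα, c) − f(Xα, c + ε/μ²)| ≤ 6·κ·ε·f(Xα, c). -/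

import Mathlib

open Finset Matrix

/-- `g_c(z) = ln(1+e^z) - ln(1-c)`. -/
noncomputable def gfun (c z : ℝ) : ℝ := Real.log (1 + Real.exp z) - Real.log (1 - c)

/-- `h_c(z) = -ln(c + (1-c)/(1+e^{-z}))`. -/
noncomputable def hfun (c z : ℝ) : ℝ := -Real.log (c + (1 - c) / (1 + Real.exp (-z)))

/-- The submatrix of `x` with rows indexed by `s` is `μ`-complex in the ℓ₁ sense. -/
def Mu1ComplexOn {N d : ℕ} (x : Fin N → Fin d → ℝ) (s : Finset (Fin N)) (μ : ℝ) : Prop :=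
  ∀ η : Fin d → ℝ,
    ∑ j ∈ s.filter (fun j => 0 ≤ x j ⬝ᵥ η), x j ⬝ᵥ η ≤
      μ * ∑ j ∈ s.filter (fun j => x j ⬝ᵥ η < 0), |x j ⬝ᵥ η|

/-!
If `c` and `c' = c + ε / μ²` both lie in `[1/κ, 1 - 1/κ]`, then passing from `c` to `c'` raises each
`g`-term and lowers each `h`-term, in either case by at most `κ (c' - c)`. The two effects pull in
opposite directions, so with `n'` terms of the first kind and at most `2 μ n'` of the second the
objective moves by at most `κ (c' - c) · 2 μ n' = 2 κ ε n' / μ`.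

On the other hand the objective is at least the logistic sum `∑ ln (1 + e^z)` over the `n'` terms of
the first kind. Pointwise `ln (1 + e^z) ≥ ln 2 / μ + (z⁺ - z⁻ / μ) / 2`, and `μ`-complexity, applied
to `-α`, says exactly that the terms `z⁺ - z⁻ / μ` have a nonnegative sum. Hence the objective is at
least `n' ln 2 / μ`, and `2 / ln 2 ≤ 3`.
-/

lemma log_sub_log_le_sub_div {a b : ℝ} (ha : 0 < a) (hb : 0 < b) :
    Real.log a - Real.log b ≤ (a - b) / b := by
  rw [← Real.log_div ha.ne' hb.ne', sub_div, div_self hb.ne']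
  exact Real.log_le_sub_one_of_pos (div_pos ha hb)

lemma card_filter_add_card_filter_le {ι : Type*} [Fintype ι] {p q : ι → Prop} [DecidablePred p]
    [DecidablePred q] (hpq : ∀ i, p i → ¬ q i) :
    #{i | p i} + #{i | q i} ≤ Fintype.card ι := by
  classical
  rw [← card_union_of_disjoint (disjoint_filter.2 fun i _ => hpq i)]
  exact card_le_univ _

section Gfun

variable {c c' : ℝ}

lemma gfun_zero (z : ℝ) : gfun 0 z = Real.log (1 + Real.exp z) := by
  simp [gfun]

lemma gfun_le_gfun (hcc' : c ≤ c') (hc' : c' < 1) (z : ℝ) : gfun c z ≤ gfun c' z :=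
  sub_le_sub_left (Real.log_le_log (by linarith) (by linarith)) _

lemma gfun_sub_gfun_le (hc : c < 1) (hc' : c' < 1) (z : ℝ) :
    gfun c' z - gfun c z ≤ (c' - c) / (1 - c') :=
  calc gfun c' z - gfun c z
      = Real.log (1 - c) - Real.log (1 - c') := by unfold gfun; ring
    _ ≤ ((1 - c) - (1 - c')) / (1 - c') :=
        log_sub_log_le_sub_div (sub_pos.2 hc) (sub_pos.2 hc')
    _ = (c' - c) / (1 - c') := by ring

end Gfun

section Hfun

variable {c c' : ℝ}

lemma hfun_eq_neg_log_sigmoid (c z : ℝ) :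
    hfun c z = -Real.log (c * Real.sigmoid (-z) + Real.sigmoid z) := by
  rw [hfun, Real.sigmoid_neg, div_eq_mul_inv, ← Real.sigmoid_def]
  ring_nf

lemma mul_sigmoid_neg_add_sigmoid_pos (hc : 0 ≤ c) (z : ℝ) :
    0 < c * Real.sigmoid (-z) + Real.sigmoid z :=
  add_pos_of_nonneg_of_pos (mul_nonneg hc (Real.sigmoid_nonneg _)) (Real.sigmoid_pos z)

lemma hfun_one (z : ℝ) : hfun 1 z = 0 := by
  simp [hfun]

lemma hfun_le_hfun (hc : 0 ≤ c) (hcc' : c ≤ c') (z : ℝ) : hfun c' z ≤ hfun c z := by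
  rw [hfun_eq_neg_log_sigmoid, hfun_eq_neg_log_sigmoid, neg_le_neg_iff]
  have hσ := Real.sigmoid_nonneg (-z)
  exact Real.log_le_log (mul_sigmoid_neg_add_sigmoid_pos hc z) (by gcongr)

lemma hfun_nonneg (hc : 0 ≤ c) (hc1 : c ≤ 1) (z : ℝ) : 0 ≤ hfun c z :=
  hfun_one z ▸ hfun_le_hfun hc hc1 z

lemma hfun_sub_hfun_le (hc : 0 < c) (hcc' : c ≤ c') (z : ℝ) :
    hfun c z - hfun c' z ≤ (c' - c) / c := by
  rw [hfun_eq_neg_log_sigmoid, hfun_eq_neg_log_sigmoid, neg_sub_neg]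
  have hσ := Real.sigmoid_pos z
  have hσ' := Real.sigmoid_pos (-z)
  calc _ ≤ (c' * Real.sigmoid (-z) + Real.sigmoid z - (c * Real.sigmoid (-z) + Real.sigmoid z)) /
          (c * Real.sigmoid (-z) + Real.sigmoid z) :=
        log_sub_log_le_sub_div (mul_sigmoid_neg_add_sigmoid_pos (hc.le.trans hcc') z)
          (mul_sigmoid_neg_add_sigmoid_pos hc.le z)
    _ = (c' - c) * Real.sigmoid (-z) / (c * Real.sigmoid (-z) + Real.sigmoid z) := by ring
    _ ≤ (c' - c) * Real.sigmoid (-z) / (c * Real.sigmoid (-z)) := by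
        have := sub_nonneg.2 hcc'
        gcongr
        exact le_add_of_nonneg_right hσ.le
    _ = (c' - c) / c := mul_div_mul_right _ _ hσ'.ne'

end Hfun

section LogisticSum

variable {N d : ℕ} {x : Fin N → Fin d → ℝ} {s : Finset (Fin N)} {μ : ℝ}

lemma log_two_add_half_le_log_one_add_exp (z : ℝ) :
    Real.log 2 + z / 2 ≤ Real.log (1 + Real.exp z) := by
  have amgm : 2 * Real.exp (z / 2) ≤ 1 + Real.exp z := by
    have hsq : Real.exp (z / 2) ^ 2 = Real.exp z := by
      rw [← Real.exp_nat_mul]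
      congr 1
      push_cast
      ring
    linarith [two_mul_le_add_sq 1 (Real.exp (z / 2))]
  calc Real.log 2 + z / 2
      = Real.log (2 * Real.exp (z / 2)) := by
        rw [Real.log_mul two_ne_zero (Real.exp_ne_zero _), Real.log_exp]
    _ ≤ Real.log (1 + Real.exp z) := Real.log_le_log (by positivity) amgm

lemma log_two_div_add_posPart_sub_negPart_le_log_one_add_exp (hμ : 1 ≤ μ) (z : ℝ) :
    Real.log 2 / μ + (z⁺ - z⁻ / μ) / 2 ≤ Real.log (1 + Real.exp z) := by
  have tangent := log_two_add_half_le_log_one_add_exp z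
  rcases le_total 0 z with hz | hz
  · have : Real.log 2 / μ ≤ Real.log 2 := div_le_self (Real.log_nonneg one_le_two) hμ
    rw [posPart_of_nonneg hz, negPart_of_nonneg hz, zero_div]
    linarith
  · have hlog : 0 ≤ Real.log (1 + Real.exp z) :=
      Real.log_nonneg (le_add_of_nonneg_right (Real.exp_pos z).le)
    rw [posPart_of_nonpos hz, negPart_of_nonpos hz]
    calc Real.log 2 / μ + (0 - -z / μ) / 2
        = (Real.log 2 + z / 2) / μ := by ring
      _ ≤ Real.log (1 + Real.exp z) / μ := by gcongr
      _ ≤ Real.log (1 + Real.exp z) := div_le_self hlog hμ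

namespace Mu1ComplexOn

lemma sum_posPart_le (h : Mu1ComplexOn x s μ) (η : Fin d → ℝ) :
    ∑ j ∈ s, (x j ⬝ᵥ η)⁺ ≤ μ * ∑ j ∈ s, (x j ⬝ᵥ η)⁻ := by
  have hpos (z : ℝ) : (if 0 ≤ z then z else 0) = z⁺ := by
    split_ifs with hz
    · exact (posPart_of_nonneg hz).symm
    · exact (posPart_of_nonpos (not_le.1 hz).le).symm
  have hneg (z : ℝ) : (if z < 0 then |z| else 0) = z⁻ := by
    split_ifs with hz
    · rw [abs_of_neg hz, negPart_of_nonpos hz.le]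
    · exact (negPart_of_nonneg (not_lt.1 hz)).symm
  simpa only [sum_filter, hpos, hneg] using h η

lemma sum_negPart_le (h : Mu1ComplexOn x s μ) (η : Fin d → ℝ) :
    ∑ j ∈ s, (x j ⬝ᵥ η)⁻ ≤ μ * ∑ j ∈ s, (x j ⬝ᵥ η)⁺ := by
  simpa only [dotProduct_neg, posPart_neg, negPart_neg] using h.sum_posPart_le (-η)

lemma card_mul_log_two_div_le_sum_log_one_add_exp (h : Mu1ComplexOn x s μ) (hμ : 1 ≤ μ)
    (η : Fin d → ℝ) :
    #s * (Real.log 2 / μ) ≤ ∑ j ∈ s, Real.log (1 + Real.exp (x j ⬝ᵥ η)) := by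
  have balance : (∑ j ∈ s, (x j ⬝ᵥ η)⁻) / μ ≤ ∑ j ∈ s, (x j ⬝ᵥ η)⁺ :=
    (div_le_iff₀' (by positivity)).2 (h.sum_negPart_le η)
  calc #s * (Real.log 2 / μ)
      ≤ #s * (Real.log 2 / μ) +
          (∑ j ∈ s, (x j ⬝ᵥ η)⁺ - (∑ j ∈ s, (x j ⬝ᵥ η)⁻) / μ) / 2 := by linarith
    _ = ∑ j ∈ s, (Real.log 2 / μ + ((x j ⬝ᵥ η)⁺ - (x j ⬝ᵥ η)⁻ / μ) / 2) := by
        rw [sum_add_distrib, sum_const, nsmul_eq_mul, ← sum_div, sum_sub_distrib, ← sum_div]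
    _ ≤ ∑ j ∈ s, Real.log (1 + Real.exp (x j ⬝ᵥ η)) :=
        sum_le_sum fun j _ => log_two_div_add_posPart_sub_negPart_le_log_one_add_exp hμ _

end Mu1ComplexOn

end LogisticSum

/-- The 3PL item objective `f(Xα, c)`, with `S` and `T` the sets of indices labelled `-1` and `1`.
Arbitrary index sets are allowed, so that the labels themselves need not be mentioned. -/
noncomputable def itemObjective {N d : ℕ} (x : Fin N → Fin d → ℝ) (S T : Finset (Fin N)) (c : ℝ)
    (α : Fin d → ℝ) : ℝ :=
  ∑ j ∈ S, gfun c (x j ⬝ᵥ α) + ∑ j ∈ T, hfun c (x j ⬝ᵥ α)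

section ItemObjective

variable {N d : ℕ} {x : Fin N → Fin d → ℝ} {S T : Finset (Fin N)} {κ μ ε c c' : ℝ}

lemma card_mul_log_two_div_le_itemObjective (h : Mu1ComplexOn x S μ) (hμ : 1 ≤ μ) (hc : 0 ≤ c)
    (hc1 : c < 1) (α : Fin d → ℝ) : #S * (Real.log 2 / μ) ≤ itemObjective x S T c α :=
  calc #S * (Real.log 2 / μ)
      ≤ ∑ j ∈ S, Real.log (1 + Real.exp (x j ⬝ᵥ α)) :=
        h.card_mul_log_two_div_le_sum_log_one_add_exp hμ α
    _ ≤ ∑ j ∈ S, gfun c (x j ⬝ᵥ α) :=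
        sum_le_sum fun j _ => gfun_zero (x j ⬝ᵥ α) ▸ gfun_le_gfun hc hc1 _
    _ ≤ itemObjective x S T c α :=
        le_add_of_nonneg_right (sum_nonneg fun _ _ => hfun_nonneg hc hc1.le _)

lemma abs_itemObjective_sub_le (hc : 0 < c) (hcc' : c ≤ c') (hc' : c' < 1) (α : Fin d → ℝ) :
    |itemObjective x S T c α - itemObjective x S T c' α| ≤
      max (#S * ((c' - c) / (1 - c'))) (#T * ((c' - c) / c)) := by
  have decrease_nonneg : 0 ≤ ∑ j ∈ T, (hfun c (x j ⬝ᵥ α) - hfun c' (x j ⬝ᵥ α)) :=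
    sum_nonneg fun j _ => sub_nonneg.2 (hfun_le_hfun hc.le hcc' _)
  have decrease_le : ∑ j ∈ T, (hfun c (x j ⬝ᵥ α) - hfun c' (x j ⬝ᵥ α)) ≤
      #T * ((c' - c) / c) := by
    simpa only [nsmul_eq_mul] using
      sum_le_card_nsmul T _ _ fun j _ => hfun_sub_hfun_le hc hcc' (x j ⬝ᵥ α)
  have increase_nonneg : 0 ≤ ∑ j ∈ S, (gfun c' (x j ⬝ᵥ α) - gfun c (x j ⬝ᵥ α)) :=
    sum_nonneg fun j _ => sub_nonneg.2 (gfun_le_gfun hcc' hc' _)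
  have increase_le : ∑ j ∈ S, (gfun c' (x j ⬝ᵥ α) - gfun c (x j ⬝ᵥ α)) ≤
      #S * ((c' - c) / (1 - c')) := by
    simpa only [nsmul_eq_mul] using
      sum_le_card_nsmul S _ _ fun j _ => gfun_sub_gfun_le (hcc'.trans_lt hc') hc' (x j ⬝ᵥ α)
  have split : itemObjective x S T c α - itemObjective x S T c' α =
      ∑ j ∈ T, (hfun c (x j ⬝ᵥ α) - hfun c' (x j ⬝ᵥ α)) -
        ∑ j ∈ S, (gfun c' (x j ⬝ᵥ α) - gfun c (x j ⬝ᵥ α)) := by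
    simp only [itemObjective, sum_sub_distrib]
    ring
  rw [split]
  exact abs_sub_le_of_nonneg_of_le decrease_nonneg (decrease_le.trans (le_max_right _ _))
    increase_nonneg (increase_le.trans (le_max_left _ _))

lemma abs_itemObjective_sub_le_mul_card (hκ : 0 < κ) (hμ : 1 ≤ μ)
    (hST : (#T : ℝ) ≤ 2 * μ * #S) (hc : 1 / κ ≤ c) (hcc' : c ≤ c') (hc' : c' ≤ 1 - 1 / κ)
    (α : Fin d → ℝ) :
    |itemObjective x S T c α - itemObjective x S T c' α| ≤ κ * (c' - c) * (2 * μ * #S) := by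
  have hκ' : 0 < 1 / κ := one_div_pos.2 hκ
  have div_le {a : ℝ} (ha : 1 / κ ≤ a) : (c' - c) / a ≤ κ * (c' - c) :=
    calc (c' - c) / a ≤ (c' - c) / (1 / κ) := by gcongr
      _ = κ * (c' - c) := by rw [div_div_eq_mul_div, div_one, mul_comm]
  have hSS : (#S : ℝ) ≤ 2 * μ * #S := le_mul_of_one_le_left (Nat.cast_nonneg _) (by linarith)
  have hδ : 0 ≤ κ * (c' - c) := mul_nonneg hκ.le (sub_nonneg.2 hcc')
  refine (abs_itemObjective_sub_le (hκ'.trans_le hc) hcc' (by linarith) α).trans (max_le ?_ ?_)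
  · calc #S * ((c' - c) / (1 - c')) ≤ #S * (κ * (c' - c)) := by
          gcongr
          exact div_le (by linarith)
      _ = κ * (c' - c) * #S := mul_comm _ _
      _ ≤ κ * (c' - c) * (2 * μ * #S) := mul_le_mul_of_nonneg_left hSS hδ
  · calc #T * ((c' - c) / c) ≤ #T * (κ * (c' - c)) := by
          gcongr
          exact div_le hc
      _ = κ * (c' - c) * #T := mul_comm _ _
      _ ≤ κ * (c' - c) * (2 * μ * #S) := mul_le_mul_of_nonneg_left hST hδ

theorem stmt19_general (hκ : 0 < κ) (hμ : 1 ≤ μ) (hε : 0 ≤ ε) (hST : (#T : ℝ) ≤ 2 * μ * #S)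
    (hcomplex : Mu1ComplexOn x S μ) (hc : 1 / κ ≤ c) (hc' : c + ε / μ ^ 2 ≤ 1 - 1 / κ)
    (α : Fin d → ℝ) :
    |itemObjective x S T c α - itemObjective x S T (c + ε / μ ^ 2) α| ≤
      3 * κ * ε * itemObjective x S T c α := by
  have hδ : 0 ≤ ε / μ ^ 2 := by positivity
  have hκ' : 0 < 1 / κ := one_div_pos.2 hκ
  have two_le : 2 ≤ 3 * Real.log 2 := by linarith [Real.log_two_gt_d9]
  calc _ ≤ κ * (c + ε / μ ^ 2 - c) * (2 * μ * #S) :=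
        abs_itemObjective_sub_le_mul_card hκ hμ hST hc (le_add_of_nonneg_right hδ) hc' α
    _ = κ * ε * (#S * (2 / μ)) := by field_simp; ring
    _ ≤ κ * ε * (#S * (3 * Real.log 2 / μ)) := by gcongr
    _ = 3 * κ * ε * (#S * (Real.log 2 / μ)) := by ring
    _ ≤ 3 * κ * ε * itemObjective x S T c α := by
        gcongr
        exact card_mul_log_two_div_le_itemObjective hcomplex hμ (by linarith) (by linarith) α

end ItemObjective

/-- Perturbing the guessing parameter `c ∈ [1/κ, 1/2)` by an additive `ε/μ²` changes
the 3PL item objective `f(Xα, c)` by at most a multiplicative factor `1 + 6κε`. -/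
theorem stmt19 (κ μ ε : ℝ) (hκ : 4 ≤ κ) (hμ : 1 ≤ μ) (hε0 : 0 < ε)
    (hε : ε ≤ μ ^ 2 / 4)
    {n : ℕ} (x : Fin n → Fin 2 → ℝ) (Y : Fin n → ℝ) (hY : ∀ j, Y j = 1 ∨ Y j = -1)
    (hn' : 1 ≤ (Finset.univ.filter fun j => Y j = -1).card)
    (hn : (n : ℝ) ≤ (1 + 2 * μ) * ((Finset.univ.filter fun j => Y j = -1).card : ℝ))
    (hcomplex : Mu1ComplexOn x (Finset.univ.filter fun j => Y j = -1) μ) :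
    ∀ c : ℝ, 1 / κ ≤ c → c < 1 / 2 → ∀ α : Fin 2 → ℝ,
      |((∑ j ∈ Finset.univ.filter (fun j => Y j = -1), gfun c (x j ⬝ᵥ α)) +
            ∑ j ∈ Finset.univ.filter (fun j => Y j = 1), hfun c (x j ⬝ᵥ α)) -
          ((∑ j ∈ Finset.univ.filter (fun j => Y j = -1),
              gfun (c + ε / μ ^ 2) (x j ⬝ᵥ α)) +
            ∑ j ∈ Finset.univ.filter (fun j => Y j = 1),
              hfun (c + ε / μ ^ 2) (x j ⬝ᵥ α))| ≤
        6 * κ * ε *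
          ((∑ j ∈ Finset.univ.filter (fun j => Y j = -1), gfun c (x j ⬝ᵥ α)) +
            ∑ j ∈ Finset.univ.filter (fun j => Y j = 1), hfun c (x j ⬝ᵥ α)) := by
  intro c hc hc2 α
  have hST : (#{j | Y j = 1} : ℝ) ≤ 2 * μ * #{j | Y j = -1} := by
    have hcard : #{j | Y j = -1} + #{j | Y j = 1} ≤ n := by
      simpa using card_filter_add_card_filter_le (p := (Y · = -1)) (q := (Y · = 1))
        fun j hj hj' => by linarith
    have : (#{j | Y j = -1} : ℝ) + #{j | Y j = 1} ≤ n := mod_cast hcard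
    linarith
  have hδ : ε / μ ^ 2 ≤ 1 / 4 := by
    rw [div_le_iff₀ (by positivity)]
    linarith
  have hκ4 : 1 / κ ≤ 1 / 4 := one_div_le_one_div_of_le (by norm_num) hκ
  have bound := stmt19_general (by linarith) hμ hε0.le hST hcomplex hc (by linarith) α
  refine bound.trans ?_
  change _ ≤ 6 * κ * ε * itemObjective x _ _ c α
  linarith [(abs_nonneg _).trans bound]
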